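/- arXiv:2511.10417 — 3 statements merged into one kernel-verified Lean document; each statement's English description precedes it below -/
import Mathlib

section
/- The Vámos matroid V is not algebraic: there exist no field extension k ⊆ K and injective map σ from the ground set of V into K such that a subset I of the ground set is independent in V exactly when the family (σ(e))_{e ∈ I} is algebraically independent over k. -/
/-- The five circuit-hyperplanes of the Vámos matroid on the ground set `Fin 8`,
where `0,1,2,3,4,5,6,7` stand for `a,a',b,b',c,c',d,d'` respectively. -/
def vamosCH : Set (Finset (Fin 8)) :=
  {{0, 1, 2, 3}, {0, 1, 4, 5}, {2, 3, 4, 5}, {2, 3, 6, 7}, {4, 5, 6, 7}}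

/-- The independent sets of the Vámos matroid: all sets of size at most `3` together
with all `4`-element sets that are not circuit-hyperplanes. -/
def vamosIndep (I : Finset (Fin 8)) : Prop :=
  I.card ≤ 3 ∨ (I.card = 4 ∧ I ∉ vamosCH)


open Polynomial in
lemma exists_place_vamos {k K : Type*} [Field k] [Field K] [Algebra k K] [Infinite k]
    (A L : IntermediateField k K) (hAL : A ≤ L) [IsAlgClosed A] {c u v : K}
    (hc : Transcendental L c) (hu : IsAlgebraic (Algebra.adjoin A {c}) u)
    (hv : IsAlgebraic (Algebra.adjoin A {c}) v) :
    ∃ (O : ValuationSubring K) (c0 : k) (p : A), (∀ x ∈ L, x ∈ O) ∧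
      c - algebraMap k K c0 ∈ O.nonunits ∧ u ∈ O ∧ v ∈ O ∧ u - p ∈ O.nonunits := by
  have key : ∀ w : K, IsAlgebraic (Algebra.adjoin A {c}) w →
      ∃ s : A[X], s ≠ 0 ∧ RingHom.IsIntegralElem (aeval c : A[X] →ₐ[A] K).toRingHom
        (aeval c s * w) := by
    intro w hw
    obtain ⟨y, hy, q, hq, hq0⟩ := hw.exists_integral_multiple
    obtain ⟨y, hy'⟩ := y
    rw [Algebra.adjoin_singleton_eq_range_aeval] at hy'
    obtain ⟨s, hs⟩ := hy'
    have hs : aeval c s = y := hs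
    refine ⟨s, ?_, ?_⟩
    · rintro rfl
      apply hy
      ext
      simp [← hs]
    · have hlift : q ∈ Polynomial.lifts
          ((aeval (⟨c, Algebra.self_mem_adjoin_singleton A c⟩ : Algebra.adjoin A {c}) :
            A[X] →ₐ[A] Algebra.adjoin A {c}).toRingHom) := by
        rw [Polynomial.lifts_iff_coeff_lifts]
        intro n
        obtain ⟨z, hz⟩ := q.coeff n
        have hz2 := hz
        rw [Algebra.adjoin_singleton_eq_range_aeval] at hz2
        obtain ⟨t, ht⟩ := hz2
        refine ⟨t, ?_⟩
        apply Subtype.ext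
        refine Eq.trans ?_ ht
        exact (Polynomial.aeval_algebraMap_apply K
          (⟨c, Algebra.self_mem_adjoin_singleton A c⟩ : Algebra.adjoin A {c}) t).symm
      obtain ⟨r, hr, -, hrm⟩ := Polynomial.lifts_and_natDegree_eq_and_monic hlift hq
      refine ⟨r, hrm, ?_⟩
      rw [← hr, eval₂_map] at hq0
      have e1 : (algebraMap (Algebra.adjoin A {c}) K).comp
        ((aeval (⟨c, Algebra.self_mem_adjoin_singleton A c⟩ : Algebra.adjoin A {c}) :
            A[X] →ₐ[A] Algebra.adjoin A {c}).toRingHom) = (aeval c : A[X] →ₐ[A] K).toRingHom := by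
        ext t
        · simp only [RingHom.comp_apply, AlgHom.toRingHom_eq_coe, RingHom.coe_coe, aeval_C]
          rfl
        · simp
      rw [e1] at hq0
      rw [hs]
      exact hq0
  obtain ⟨s, hs0, hs⟩ := key u hu
  obtain ⟨t, ht0, ht⟩ := key v hv
  obtain ⟨c0, hc0⟩ : ∃ c0 : k, (s * t).eval (algebraMap k A c0) ≠ 0 := by
    by_contra hcon
    push Not at hcon
    have : Set.Finite {x : A | (s*t).IsRoot x} :=
      Polynomial.finite_setOfPred_isRoot (mul_ne_zero hs0 ht0)
    exact (Set.infinite_range_of_injective (algebraMap k A).injective)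
      (this.subset (by rintro _ ⟨x, rfl⟩; exact hcon x))
  rw [eval_mul] at hc0
  let R0 : Subring K := (Algebra.adjoin L {c}).toSubring
  have hcR : c ∈ R0 := Algebra.self_mem_adjoin_singleton L c
  have hkR : ∀ x ∈ L, x ∈ R0 := fun x hx => (Algebra.adjoin L {c}).algebraMap_mem ⟨x, hx⟩
  have hc0R : algebraMap k K c0 ∈ R0 := hkR _ (L.algebraMap_mem c0)
  let d : R0 := ⟨c - algebraMap k K c0, sub_mem hcR hc0R⟩
  have hI : Ideal.span {d} ≠ ⊤ := by
    rw [Ne, Ideal.eq_top_iff_one, Ideal.mem_span_singleton]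
    rintro ⟨⟨w, hw⟩, he⟩
    have hw : w ∈ Algebra.adjoin L {c} := hw
    rw [Algebra.adjoin_singleton_eq_range_aeval] at hw
    obtain ⟨q, rfl⟩ := hw
    have he := congrArg Subtype.val he
    have he2 : aeval c ((X - C (algebraMap k L c0)) * q - 1) = 0 := by
      rw [map_sub, map_mul]
      have : (1 : K) = (c - algebraMap k K c0) * aeval c q := he
      simp only [map_sub, aeval_X, aeval_C, map_one]
      rw [← IsScalarTower.algebraMap_apply k L K, ← this, sub_self]
    have he3 := (transcendental_iff.1 hc) _ he2
    have := congrArg (eval (algebraMap k L c0)) he3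
    simp at this
  obtain ⟨O, hO, hIsub⟩ := Ideal.image_subset_nonunits_valuationSubring (A := R0) _ hI
  have hLO : ∀ x ∈ L, x ∈ O := fun x hx => hO (hkR x hx)
  have hcO : c ∈ O := hO hcR
  have hcm : c - algebraMap k K c0 ∈ O.nonunits :=
    hIsub ⟨d, Ideal.subset_span rfl, rfl⟩
  let κ := IsLocalRing.ResidueField O
  let res : O →+* κ := IsLocalRing.residue O
  have hres : ∀ x : O, res x = 0 ↔ (x : K) ∈ O.nonunits := by
    intro x
    rw [← SetLike.mem_coe, ← O.image_maximalIdeal]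
    have h1 := IsLocalRing.residue_eq_zero_iff (R := O) x
    rw [show res x = 0 ↔ x ∈ IsLocalRing.maximalIdeal O from h1]
    simp
  let ιA : A →+* O :=
    { toFun := fun x => ⟨x, hLO _ (hAL x.2)⟩
      map_one' := rfl
      map_mul' := fun _ _ => rfl
      map_zero' := rfl
      map_add' := fun _ _ => rfl }
  let θ : A →+* κ := res.comp ιA
  let α : A[X] →+* O := eval₂RingHom ιA ⟨c, hcO⟩
  have hα : O.subtype.comp α = (aeval c : A[X] →ₐ[A] K).toRingHom := by
    ext t
    · simp [α]; rfl
    · simp [α]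
  have hα' : ∀ r, (α r : K) = aeval c r := fun r => RingHom.congr_fun hα r
  have hαθ : res.comp α = θ.comp (evalRingHom (algebraMap k A c0)) := by
    ext t
    · simp [α, θ]
    · simp only [α, θ, RingHom.comp_apply, coe_eval₂RingHom, eval₂_X, coe_evalRingHom, eval_X]
      rw [← sub_eq_zero, ← map_sub, hres]
      exact hcm
  have hαθ' : ∀ r, res (α r) = θ (r.eval (algebraMap k A c0)) := fun r => RingHom.congr_fun hαθ r
  have unitO : ∀ r : A[X], r.eval (algebraMap k A c0) ≠ 0 → ∃ y : O, (y : K) * aeval c r = 1 := by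
    intro r hr
    have : IsUnit (α r) := by
      by_contra hcon
      have : res (α r) = 0 := by
        rw [IsLocalRing.residue_eq_zero_iff]
        exact hcon
      rw [hαθ'] at this
      exact hr ((map_eq_zero θ).1 this)
    obtain ⟨y, hy⟩ := this.exists_left_inv
    refine ⟨y, ?_⟩
    rw [← hα']
    exact congrArg Subtype.val hy
  have intO : ∀ w : K, RingHom.IsIntegralElem (aeval c : A[X] →ₐ[A] K).toRingHom w →
      ∃ y : O, (y : K) = w ∧ RingHom.IsIntegralElem α y := by
    rintro w ⟨q, hqm, hq⟩
    rw [← hα] at hq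
    have : IsIntegral O w := ⟨q.map α, hqm.map α, by
      rw [eval₂_map]; exact hq⟩
    obtain ⟨y, hy⟩ := IsIntegrallyClosed.isIntegral_iff.1 this
    have hy : (y : K) = w := hy
    refine ⟨y, hy, q, hqm, ?_⟩
    apply Subtype.ext
    have := Polynomial.hom_eval₂ q α O.subtype y
    rw [show O.subtype y = w from hy] at this
    rw [hq] at this
    exact this
  obtain ⟨y, hy, hyint⟩ := intO _ hs
  obtain ⟨z, hz, -⟩ := intO _ ht
  obtain ⟨s', hs'⟩ := unitO s (left_ne_zero_of_mul hc0)
  obtain ⟨t', ht'⟩ := unitO t (right_ne_zero_of_mul hc0)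
  have huO : u = ((s' * y : O) : K) := by
    push_cast
    rw [hy, ← mul_assoc, hs', one_mul]
  have hvO : v = ((t' * z : O) : K) := by
    push_cast
    rw [hz, ← mul_assoc, ht', one_mul]
  obtain ⟨q, hqm, hq⟩ := hyint
  obtain ⟨a, ha⟩ : ∃ a : A, θ a = res y := by
    let _ : Algebra A κ := θ.toAlgebra
    have hinteg : IsIntegral A (res y) := by
      refine ⟨q.map (evalRingHom (algebraMap k A c0)), hqm.map _, ?_⟩
      rw [eval₂_map]
      change eval₂ (θ.comp _) _ _ = 0
      rw [← hαθ, ← Polynomial.hom_eval₂, hq, map_zero]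
    have hd := IsAlgClosed.degree_eq_one_of_irreducible A (minpoly.irreducible hinteg)
    exact minpoly.mem_range_of_degree_eq_one A (res y) hd
  refine ⟨O, c0, a / s.eval (algebraMap k A c0), hLO, hcm, ?_, ?_, ?_⟩
  · rw [huO]; exact (s' * y).2
  · rw [hvO]; exact (t' * z).2
  · have h1 : res (s' * y - ιA (a / s.eval (algebraMap k A c0))) = 0 := by
      have h2 : res s' * θ (s.eval (algebraMap k A c0)) = 1 := by
        rw [← hαθ', ← map_mul, ← map_one res]
        congr 1
        apply Subtype.ext
        push_cast
        rw [hα', hs']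
      rw [map_sub, map_mul, ← ha]
      change _ - θ _ = 0
      have h3 : θ (s.eval (algebraMap k A c0)) ≠ 0 := right_ne_zero_of_mul_eq_one h2
      rw [map_div₀, sub_eq_zero, eq_div_iff h3, mul_right_comm, h2, one_mul]
    rw [hres] at h1
    rw [huO]
    exact h1

lemma aeval_mem_vamos {k K ι : Type*} [Field k] [Field K] [Algebra k K]
    (S : Subring K) (hk : ∀ x : k, algebraMap k K x ∈ S) (x : ι → K)
    (hx : ∀ i, x i ∈ S) (f : MvPolynomial ι k) : MvPolynomial.aeval x f ∈ S := by
  induction f using MvPolynomial.induction_on with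
  | C a => simpa using hk a
  | add p q hp hq => rw [map_add]; exact add_mem hp hq
  | mul_X p i hp => rw [map_mul, MvPolynomial.aeval_X]; exact mul_mem hp (hx i)

lemma aeval_sub_mem_nonunits_vamos {k K ι : Type*} [Field k] [Field K] [Algebra k K]
    (O : ValuationSubring K) (hk : ∀ x : k, algebraMap k K x ∈ O) (x y : ι → K)
    (hx : ∀ i, x i ∈ O) (hy : ∀ i, y i ∈ O) (hxy : ∀ i, x i - y i ∈ O.nonunits)
    (f : MvPolynomial ι k) :
    MvPolynomial.aeval x f ∈ O ∧ MvPolynomial.aeval y f ∈ O ∧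
      MvPolynomial.aeval x f - MvPolynomial.aeval y f ∈ O.nonunits := by
  have hmul : ∀ a b : K, a ∈ O → b ∈ O.nonunits → a * b ∈ O.nonunits := by
    intro a b ha hb
    rw [ValuationSubring.mem_nonunits_iff] at hb ⊢
    rw [← ValuationSubring.valuation_le_one_iff] at ha
    rw [map_mul]
    exact lt_of_le_of_lt (mul_le_of_le_one_left' ha) hb
  induction f using MvPolynomial.induction_on with
  | C a =>
    simp only [MvPolynomial.aeval_C, sub_self]
    exact ⟨hk a, hk a, O.nonunits.zero_mem⟩
  | add p q hp hq =>
    simp only [map_add]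
    refine ⟨add_mem hp.1 hq.1, add_mem hp.2.1 hq.2.1, ?_⟩
    rw [add_sub_add_comm]
    exact add_mem hp.2.2 hq.2.2
  | mul_X p i hp =>
    simp only [map_mul, MvPolynomial.aeval_X]
    refine ⟨mul_mem hp.1 (hx i), mul_mem hp.2.1 (hy i), ?_⟩
    have : MvPolynomial.aeval x p * x i - MvPolynomial.aeval y p * y i =
      MvPolynomial.aeval x p * (x i - y i) +
        y i * (MvPolynomial.aeval x p - MvPolynomial.aeval y p) := by ring
    rw [this]
    exact add_mem (hmul _ _ hp.1 (hxy i)) (hmul _ _ (hy i) hp.2.2)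

/-- Specialisation: `b` becomes dependent over `k[p]` for some `p` in `A`. -/
lemma specialise_vamos {k K : Type*} [Field k] [Field K] [Algebra k K] [Infinite k]
    (A L : IntermediateField k K) (hAL : A ≤ L) [IsAlgClosed A] {c u : K} (b : Fin 2 → K)
    (hb : ∀ i, b i ∈ L)
    (hc : Transcendental L c) (hu : IsAlgebraic (Algebra.adjoin A {c}) u)
    (hcu : AlgebraicIndependent k ![c, u])
    (hdep : ¬ AlgebraicIndependent k (Sum.elim b ![c, u])) :
    ∃ p ∈ A, ¬ AlgebraicIndependent (Algebra.adjoin k {p}) b := by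
  rw [algebraicIndependent_iff] at hdep
  push Not at hdep
  obtain ⟨f, hf, hf0⟩ := hdep
  set F := MvPolynomial.sumAlgEquiv k (Fin 2) (Fin 2) f with hF
  have hF0 : F ≠ 0 := by
    rw [hF, Ne, EmbeddingLike.map_eq_zero_iff]; exact hf0
  obtain ⟨m, hm⟩ := MvPolynomial.ne_zero_iff.1 hF0
  set g := MvPolynomial.coeff m F with hg
  have hgc : MvPolynomial.aeval ![c, u] g ≠ 0 := by
    intro h
    exact hm ((algebraicIndependent_iff.1 hcu) g h)
  have hgalg : IsAlgebraic (Algebra.adjoin A {c}) (MvPolynomial.aeval ![c, u] g) := by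
    refine aeval_mem_vamos (Subalgebra.algebraicClosure (Algebra.adjoin A {c}) K).toSubring
      ?_ ![c, u] ?_ g
    · intro x
      exact isAlgebraic_algebraMap (A := K)
          (algebraMap A (Algebra.adjoin A {c}) (algebraMap k A x))
    · intro i
      fin_cases i
      · exact isAlgebraic_algebraMap (A := K)
          (⟨c, Algebra.self_mem_adjoin_singleton A c⟩ : Algebra.adjoin A {c})
      · exact hu
  obtain ⟨O, c0, p, hLO, hcm, huO, hvO, hup⟩ := exists_place_vamos A L hAL hc hu hgalg.inv
  have hkO : ∀ x : k, algebraMap k K x ∈ O := fun x => hLO _ (L.algebraMap_mem x)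
  have hpO : (p : K) ∈ O := hLO _ (hAL p.2)
  have hcO : c ∈ O := by
    have : c = (c - algebraMap k K c0) + algebraMap k K c0 := by ring
    rw [this]
    exact add_mem (O.nonunits_subset hcm) (hkO c0)
  refine ⟨p, p.2, ?_⟩
  intro hind
  let φ : MvPolynomial (Fin 2) k →ₐ[k] Algebra.adjoin k {(p : K)} :=
    MvPolynomial.aeval ![algebraMap k _ c0, ⟨p, Algebra.self_mem_adjoin_singleton k _⟩]
  have hφ : ∀ r, (φ r : K) = MvPolynomial.aeval ![algebraMap k K c0, (p : K)] r := by
    intro r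
    have : (Algebra.adjoin k {(p : K)}).val.comp φ =
        MvPolynomial.aeval ![algebraMap k K c0, (p : K)] := by
      apply MvPolynomial.algHom_ext
      intro i
      fin_cases i <;> simp [φ]
    exact DFunLike.congr_fun this r
  have hG : ∀ f : MvPolynomial (Fin 2 ⊕ Fin 2) k,
      MvPolynomial.aeval b (MvPolynomial.map φ.toRingHom (MvPolynomial.sumAlgEquiv k _ _ f)) =
      MvPolynomial.aeval (Sum.elim b ![algebraMap k K c0, (p : K)]) f := by
    intro f
    induction f using MvPolynomial.induction_on with
    | C a =>
      simp only [MvPolynomial.sumAlgEquiv_C_inl, MvPolynomial.map_C, MvPolynomial.aeval_C]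
      change (φ (MvPolynomial.C a) : K) = _
      rw [hφ, MvPolynomial.aeval_C]
    | add p q hp hq => simp only [map_add, hp, hq]
    | mul_X q i hq =>
      rw [map_mul, map_mul, map_mul, map_mul, hq]
      congr 1
      rcases i with i | i
      · simp
      · simp only [MvPolynomial.sumAlgEquiv_X_inr, MvPolynomial.map_C, MvPolynomial.aeval_C,
          MvPolynomial.aeval_X, Sum.elim_inr]
        change (φ (MvPolynomial.X i) : K) = _
        rw [hφ, MvPolynomial.aeval_X]
  have hz : MvPolynomial.aeval (Sum.elim b ![algebraMap k K c0, (p : K)]) f = 0 := by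
    have h1 := aeval_sub_mem_nonunits_vamos O hkO (Sum.elim b ![c, u])
      (Sum.elim b ![algebraMap k K c0, (p : K)])
      (by
        rintro (i | i)
        · exact hLO _ (hb i)
        · fin_cases i
          · exact hcO
          · exact huO)
      (by
        rintro (i | i)
        · exact hLO _ (hb i)
        · fin_cases i
          · exact hkO c0
          · exact hpO)
      (by
        rintro (i | i)
        · rw [Sum.elim_inl, Sum.elim_inl, sub_self]; exact O.nonunits.zero_mem
        · fin_cases i
          · exact hcm
          · exact hup) f
    have h2 := h1.2.2
    rw [hf, ValuationSubring.mem_nonunits_iff_or] at h2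
    rcases h2 with h2 | h2
    · rwa [zero_sub, neg_eq_zero] at h2
    · exfalso
      apply h2
      apply hLO
      apply inv_mem
      rw [zero_sub]
      apply neg_mem
      have : MvPolynomial.aeval (Sum.elim b ![algebraMap k K c0, (p : K)]) f ∈
          L.toSubalgebra.toSubring := by
        apply aeval_mem_vamos _ L.algebraMap_mem
        rintro (i | i)
        · exact hb i
        · fin_cases i
          · exact L.algebraMap_mem c0
          · exact hAL p.2
      exact this
  rw [← hG] at hz
  have hz2 := (algebraicIndependent_iff.1 hind) _ hz
  have hz3 := congrArg (MvPolynomial.coeff m) hz2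
  rw [MvPolynomial.coeff_map, MvPolynomial.coeff_zero] at hz3
  have hz4 : MvPolynomial.aeval ![algebraMap k K c0, (p : K)] g = 0 := by
    rw [← hφ]
    exact congrArg Subtype.val hz3
  have h1 := aeval_sub_mem_nonunits_vamos O hkO ![c, u] ![algebraMap k K c0, (p : K)]
      (by
        intro i; fin_cases i
        · exact hcO
        · exact huO)
      (by
        intro i; fin_cases i
        · exact hkO c0
        · exact hpO)
      (by
        intro i; fin_cases i
        · exact hcm
        · exact hup) g
  have h2 := h1.2.2
  rw [hz4, sub_zero, ValuationSubring.mem_nonunits_iff_or] at h2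
  exact h2.elim hgc (fun h => h hvO)

lemma dep_adjoin_vamos {k K : Type*} [Field k] [Field K] [Algebra k K] (b : Fin 2 → K) (p : K)
    (hb : AlgebraicIndependent k b) (h : ¬ AlgebraicIndependent (Algebra.adjoin k {p}) b) :
    Transcendental k p ∧ IsAlgebraic (Algebra.adjoin k (Set.range b)) p := by
  constructor
  · intro hp
    apply h
    have : Algebra.IsAlgebraic k (Algebra.adjoin k {p}) := by
      have hp' := hp.isIntegral
      have := Algebra.IsIntegral.adjoin (R := k) (S := {p}) (by simpa using hp')
      exact Algebra.IsIntegral.isAlgebraic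
    exact hb.extendScalars _
  · by_contra hcon
    have h1 : AlgebraicIndependent (Algebra.adjoin k (Set.range b)) (fun _ : Unit => p) :=
      (algebraicIndependent_unique_type_iff).2 hcon
    have h2 : AlgebraicIndependent k (Sum.elim (fun _ : Unit => p) b) := hb.sumElim h1
    have h3 : AlgebraicIndependent k (Sum.elim b (fun _ : Unit => p)) := by
      have := h2.comp (Equiv.sumComm _ _) (Equiv.injective _)
      convert this using 1
      ext (i | i) <;> rfl
    have h4 := (AlgebraicIndependent.sumElim_iff.1 h3).2
    rw [Set.range_const] at h4
    exact h h4

lemma mem_matroid_closure_vamos {k K : Type*} [Field k] [Field K] [Algebra k K] {X : Set K} {x : K} :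
    x ∈ (AlgebraicIndependent.matroid k K).closure X ↔ IsAlgebraic (Algebra.adjoin k X) x := by
  rw [AlgebraicIndependent.matroid_closure_eq]
  rfl

lemma exists_acl_aux_vamos {k F K : Type*} [Field k] [Field F] [Field K] [Algebra k K]
    [Algebra k F] [Algebra F K] [IsScalarTower k F K] [IsAlgClosed K] :
    ∃ A : IntermediateField k K, (∀ x, x ∈ A ↔ IsAlgebraic F x) ∧ IsAlgClosed A ∧
      ∀ c : K, Transcendental F c → Transcendental A c := by
  refine ⟨(algebraicClosure F K).restrictScalars k, fun x => mem_algebraicClosure_iff, ?_, ?_⟩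
  · exact (inferInstance : IsAlgClosure F (algebraicClosure F K)).isAlgClosed
  · intro c hc
    exact hc.algebraicClosure

lemma exists_acl_vamos (k : Type*) {K : Type*} [Field k] [Field K] [Algebra k K] [IsAlgClosed K]
    (X : Set K) :
    ∃ A : IntermediateField k K,
      (∀ x, x ∈ A ↔ x ∈ (AlgebraicIndependent.matroid k K).closure X) ∧ IsAlgClosed A ∧
      ∀ c, c ∉ (AlgebraicIndependent.matroid k K).closure X → Transcendental A c := by
  obtain ⟨A, h1, h2, h3⟩ :=
    exists_acl_aux_vamos (k := k) (F := IntermediateField.adjoin k X) (K := K)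
  refine ⟨A, fun x => ?_, h2, fun c hc => h3 c ?_⟩
  · rw [mem_matroid_closure_vamos, ← IntermediateField.isAlgebraic_adjoin_iff, h1]
  · rw [mem_matroid_closure_vamos, ← IntermediateField.isAlgebraic_adjoin_iff] at hc
    exact hc

lemma isAlgebraic_hom_vamos {R S K : Type*} [CommRing R] [CommRing S] [Field K] [Algebra R K]
    [Algebra S K] (j : R →+* S) (hj : Function.Injective j)
    (hc : ∀ x, algebraMap R K x = algebraMap S K (j x)) {u : K} (hu : IsAlgebraic R u) :
    IsAlgebraic S u := by
  algebraize [j]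
  have : IsScalarTower R S K := IsScalarTower.of_algebraMap_eq hc
  exact hu.extendScalars hj

lemma isAlgebraic_adjoin_vamos {k K : Type*} [Field k] [Field K] [Algebra k K]
    (A : IntermediateField k K) {Z : Set K} {c u : K} (hZ : ∀ x ∈ Z, x = c ∨ x ∈ A)
    (hu : IsAlgebraic (Algebra.adjoin k Z) u) : IsAlgebraic (Algebra.adjoin A {c}) u := by
  have hle : Algebra.adjoin k Z ≤ (Algebra.adjoin A {c}).restrictScalars k := by
    rw [Algebra.adjoin_le_iff]
    intro x hx
    rcases hZ x hx with rfl | hx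
    · exact Algebra.self_mem_adjoin_singleton _ x
    · exact (Algebra.adjoin A {c}).algebraMap_mem ⟨x, hx⟩
  exact isAlgebraic_hom_vamos (Subalgebra.inclusion hle).toRingHom
    (Subalgebra.inclusion_injective hle) (fun _ => rfl) hu

lemma notMem_closure_empty_vamos {k K : Type*} [Field k] [Field K] [Algebra k K] {p : K}
    (h : Transcendental k p) : p ∉ (AlgebraicIndependent.matroid k K).closure ∅ := by
  have hi : (AlgebraicIndependent.matroid k K).Indep {p} := by
    rw [AlgebraicIndependent.matroid_indep_iff]
    exact (algebraicIndependent_unique_type_iff).2 h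
  have := hi.notMem_closure_sdiff_of_mem (Set.mem_singleton p)
  simpa using this

/-- Two coplanar lines meet, in the presence of a third line. -/
lemma meet_vamos {k K : Type*} [Field k] [Field K] [Algebra k K] [Infinite k] [IsAlgClosed K]
    {X Y Z : Set K} (hXY : X ⊆ Y) (b : Fin 2 → K) {c u : K}
    (hbY : ∀ i, b i ∈ (AlgebraicIndependent.matroid k K).closure Y)
    (hcY : c ∉ (AlgebraicIndependent.matroid k K).closure Y)
    (hZ : Z ⊆ insert c X)
    (hu : u ∈ (AlgebraicIndependent.matroid k K).closure Z)
    (hb : AlgebraicIndependent k b) (hcu : AlgebraicIndependent k ![c, u])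
    (hdep : ¬ AlgebraicIndependent k (Sum.elim b ![c, u])) :
    ∃ p, p ∈ (AlgebraicIndependent.matroid k K).closure X ∧
      p ∈ (AlgebraicIndependent.matroid k K).closure (Set.range b) ∧
      p ∉ (AlgebraicIndependent.matroid k K).closure ∅ := by
  obtain ⟨A, hA, hAc, -⟩ := exists_acl_vamos k X
  obtain ⟨L, hL, -, hLt⟩ := exists_acl_vamos k Y
  have hAL : A ≤ L := fun x hx =>
    (hL x).2 (Matroid.closure_subset_closure _ hXY ((hA x).1 hx))
  have hu' : IsAlgebraic (Algebra.adjoin A {c}) u :=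
    isAlgebraic_adjoin_vamos A (fun x hx => (hZ hx).imp id fun hx =>
      (hA x).2 (Matroid.mem_closure_of_mem' _ hx (Set.mem_univ _)))
      (mem_matroid_closure_vamos.1 hu)
  obtain ⟨p, hpA, hp⟩ := specialise_vamos A L hAL b (fun i => (hL _).2 (hbY i)) (hLt c hcY) hu'
    hcu hdep
  obtain ⟨h1, h2⟩ := dep_adjoin_vamos b p hb hp
  exact ⟨p, (hA p).1 hpA, mem_matroid_closure_vamos.2 h2, notMem_closure_empty_vamos h1⟩

lemma submod_vamos {α : Type*} (M : Matroid α) (X Y : Set α) {n m l : ℕ∞}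
    (hX : M.eRk X ≤ n) (hY : M.eRk Y ≤ m) (h : l ≤ M.eRk (X ∩ Y)) :
    M.eRk (X ∪ Y) + l ≤ n + m := by
  calc M.eRk (X ∪ Y) + l ≤ M.eRk (X ∪ Y) + M.eRk (X ∩ Y) := by gcongr
    _ = M.eRk (X ∩ Y) + M.eRk (X ∪ Y) := add_comm _ _
    _ ≤ M.eRk X + M.eRk Y := M.eRk_inter_add_eRk_union_le X Y
    _ ≤ n + m := add_le_add hX hY

lemma pair_vamos {α : Type*} (M : Matroid α) (hE : M.E = Set.univ) {p q : α}
    (hq : q ∉ M.closure ∅) (hp : p ∉ M.closure {q}) : M.eRk {p, q} = 2 := by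
  rw [Matroid.eRk_insert_eq_add_one ⟨by simp [hE], hp⟩,
    show ({q} : Set α) = insert q ∅ by simp,
    Matroid.eRk_insert_eq_add_one ⟨by simp [hE], hq⟩, Matroid.eRk_empty]
  rfl

/-- Three pairwise meeting lines that are not coplanar are concurrent. -/
lemma concur_vamos {α : Type*} (M : Matroid α) (hE : M.E = Set.univ) {A B C : Set α}
    {p q r : α} (hpA : p ∈ M.closure A) (hpB : p ∈ M.closure B)
    (hqA : q ∈ M.closure A) (hqC : q ∈ M.closure C) (hrB : r ∈ M.closure B)
    (hrC : r ∈ M.closure C) (hq : q ∉ M.closure ∅) (hr : r ∉ M.closure ∅)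
    (hA : M.eRk A ≤ 2) (hB : M.eRk B ≤ 2) (hC : M.eRk C ≤ 2)
    (h4 : 4 ≤ M.eRk (A ∪ B ∪ C)) : p ∈ M.closure C := by
  by_contra hp
  have hpq : p ∉ M.closure {q} := fun h =>
    hp (M.closure_subset_closure_of_subset_closure (by simpa using hqC) h)
  have hpr : p ∉ M.closure {r} := fun h =>
    hp (M.closure_subset_closure_of_subset_closure (by simpa using hrC) h)
  have h2 := pair_vamos M hE hq hpq
  have h2' := pair_vamos M hE hr hpr
  rw [← M.eRk_closure_eq] at hA hB hC
  have hX : M.eRk (insert p (M.closure C)) ≤ 3 := by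
    refine (M.eRk_insert_le_add_one p _).trans ?_
    calc M.eRk (M.closure C) + 1 ≤ 2 + 1 := by gcongr
      _ = 3 := rfl
  have s1 := submod_vamos M (insert p (M.closure C)) (M.closure A) (l := 2) hX hA (by
    rw [← h2]
    apply M.eRk_mono
    rintro x (rfl | rfl)
    · exact ⟨Set.mem_insert _ _, hpA⟩
    · exact ⟨Set.mem_insert_of_mem _ hqC, hqA⟩)
  have s1' : M.eRk (insert p (M.closure C) ∪ M.closure A) ≤ 3 :=
    (ENat.add_le_add_iff_right (by simp)).1 s1
  have s2 := submod_vamos M _ (M.closure B) (l := 2) s1' hB (by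
    rw [← h2']
    apply M.eRk_mono
    rintro x (rfl | rfl)
    · exact ⟨Or.inl (Set.mem_insert _ _), hpB⟩
    · exact ⟨Or.inl (Set.mem_insert_of_mem _ hrC), hrB⟩)
  have s2' := (ENat.add_le_add_iff_right (by simp)).1 s2
  have hsub : ∀ Z : Set α, Z ⊆ M.closure Z := fun Z =>
    M.subset_closure Z (by rw [hE]; exact Set.subset_univ _)
  have h43 := h4.trans ((M.eRk_mono (show A ∪ B ∪ C ⊆
    insert p (M.closure C) ∪ M.closure A ∪ M.closure B from by
      rintro x ((hx | hx) | hx)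
      · exact Or.inl (Or.inr (hsub A hx))
      · exact Or.inr (hsub B hx)
      · exact Or.inl (Or.inl (Set.mem_insert_of_mem _ (hsub C hx))))).trans s2')
  exact absurd h43 (by norm_num)

instance decVamos : DecidablePred vamosIndep := fun I =>
  decidable_of_iff (I.card ≤ 3 ∨ (I.card = 4 ∧ I ∉ ({{0, 1, 2, 3}, {0, 1, 4, 5}, {2, 3, 4, 5},
    {2, 3, 6, 7}, {4, 5, 6, 7}} : Finset (Finset (Fin 8))))) (by
      simp only [vamosIndep, vamosCH, Finset.mem_insert, Finset.mem_singleton, Set.mem_insert_iff,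
        Set.mem_singleton_iff])

lemma fam_vamos {k K : Type*} [Field k] [Field K] [Algebra k K]
    (e : Fin 8 → K) (he : Function.Injective e)
    (H : ∀ I : Finset (Fin 8), vamosIndep I ↔
      (AlgebraicIndependent.matroid k K).Indep (e '' (I : Set (Fin 8))))
    {ι : Type*} [Fintype ι] (s : ι → Fin 8) (hs : Function.Injective s) :
    AlgebraicIndependent k (e ∘ s) ↔ vamosIndep (Finset.univ.image s) := by
  rw [H, ← algebraicIndependent_subtype_range (he.comp hs)]
  have : e '' ((Finset.univ.image s : Finset (Fin 8)) : Set (Fin 8)) = Set.range (e ∘ s) := by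
    rw [Finset.coe_image, Finset.coe_univ, Set.image_univ, ← Set.range_comp]
  rw [this]
  rfl

lemma cl_vamos {k K : Type*} [Field k] [Field K] [Algebra k K]
    (e : Fin 8 → K) (he : Function.Injective e)
    (H : ∀ I : Finset (Fin 8), vamosIndep I ↔
      (AlgebraicIndependent.matroid k K).Indep (e '' (I : Set (Fin 8))))
    (I : Finset (Fin 8)) (x : Fin 8) (hI : vamosIndep I) (hx : x ∉ I) :
    e x ∈ (AlgebraicIndependent.matroid k K).closure (e '' (I : Set (Fin 8))) ↔
      ¬ vamosIndep (insert x I) := by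
  have hI' := (H I).1 hI
  rw [hI'.mem_closure_iff_of_notMem (by rwa [he.mem_set_image, Finset.mem_coe]), H,
    Finset.coe_insert, Set.image_insert_eq, Matroid.dep_iff]
  simp

lemma rk_vamos {k K : Type*} [Field k] [Field K] [Algebra k K]
    (e : Fin 8 → K) (he : Function.Injective e)
    (H : ∀ I : Finset (Fin 8), vamosIndep I ↔
      (AlgebraicIndependent.matroid k K).Indep (e '' (I : Set (Fin 8))))
    (I : Finset (Fin 8)) (hI : vamosIndep I) :
    (AlgebraicIndependent.matroid k K).eRk (e '' (I : Set (Fin 8))) = I.card := by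
  rw [((H I).1 hI).eRk_eq_encard, he.encard_image, Set.encard_coe_eq_coe_finsetCard]

lemma meet8_vamos {k K : Type*} [Field k] [Field K] [Algebra k K] [Infinite k] [IsAlgClosed K]
    (e : Fin 8 → K) (he : Function.Injective e)
    (H : ∀ I : Finset (Fin 8), vamosIndep I ↔
      (AlgebraicIndependent.matroid k K).Indep (e '' (I : Set (Fin 8))))
    (a a' b b' c c' : Fin 8)
    (h1 : vamosIndep {a, a', b} ∧ b' ∉ ({a, a', b} : Finset (Fin 8)) ∧
      ¬ vamosIndep (insert b' {a, a', b}))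
    (h2 : c ∉ ({a, a', b} : Finset (Fin 8)) ∧ vamosIndep (insert c {a, a', b}))
    (h3 : vamosIndep {a, a', c} ∧ c' ∉ ({a, a', c} : Finset (Fin 8)) ∧
      ¬ vamosIndep (insert c' {a, a', c}))
    (hb : b ≠ b') (hc : c ≠ c')
    (h4 : Function.Injective (Sum.elim ![b, b'] ![c, c']) ∧
      ¬ vamosIndep (Finset.univ.image (Sum.elim ![b, b'] ![c, c']))) :
    ∃ p, p ∈ (AlgebraicIndependent.matroid k K).closure
        (e '' (({a, a'} : Finset (Fin 8)) : Set (Fin 8))) ∧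
      p ∈ (AlgebraicIndependent.matroid k K).closure
        (e '' (({b, b'} : Finset (Fin 8)) : Set (Fin 8))) ∧
      p ∉ (AlgebraicIndependent.matroid k K).closure ∅ := by
  have hinj : ∀ x y : Fin 8, x ≠ y → Function.Injective ![x, y] := by decide
  have hind : ∀ x y : Fin 8, vamosIndep (Finset.univ.image ![x, y]) := by
    intro x y
    left
    exact Finset.card_image_le.trans (by simp)
  have hrange : Set.range (e ∘ ![b, b']) = e '' (({b, b'} : Finset (Fin 8)) : Set (Fin 8)) := by
    rw [Set.range_comp]
    congr 1
    simp [Set.pair_comm]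
  rw [← hrange]
  have hcc : ![e c, e c'] = e ∘ ![c, c'] := by
    ext i; fin_cases i <;> rfl
  have hE : ∀ S : Finset (Fin 8), ∀ x ∈ S,
      e x ∈ (AlgebraicIndependent.matroid k K).closure (e '' (S : Set (Fin 8))) := fun S x hx =>
    Matroid.mem_closure_of_mem' _ ⟨x, hx, rfl⟩ (Set.mem_univ _)
  refine meet_vamos (X := e '' (({a, a'} : Finset (Fin 8)) : Set (Fin 8)))
    (Y := e '' (({a, a', b} : Finset (Fin 8)) : Set (Fin 8)))
    (Z := e '' (({a, a', c} : Finset (Fin 8)) : Set (Fin 8)))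
    (c := e c) (u := e c') ?_ (e ∘ ![b, b']) ?_ ?_ ?_ ?_ ?_ ?_ ?_
  · apply Set.image_mono
    intro x
    simp only [Finset.coe_insert, Finset.coe_singleton, Set.mem_insert_iff, Set.mem_singleton_iff]
    tauto
  · intro i
    fin_cases i
    · exact hE _ _ (by simp)
    · exact (cl_vamos e he H _ _ h1.1 h1.2.1).2 h1.2.2
  · rw [cl_vamos e he H _ _ h1.1 h2.1]
    exact not_not.2 h2.2
  · rw [← Set.image_insert_eq]
    apply Set.image_mono
    intro x
    simp only [Finset.coe_insert, Finset.coe_singleton, Set.mem_insert_iff, Set.mem_singleton_iff]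
    tauto
  · exact (cl_vamos e he H _ _ h3.1 h3.2.1).2 h3.2.2
  · exact (fam_vamos e he H _ (hinj _ _ hb)).2 (hind _ _)
  · rw [hcc]
    exact (fam_vamos e he H _ (hinj _ _ hc)).2 (hind _ _)
  · rw [hcc, ← Sum.comp_elim]
    exact fun h => h4.2 ((fam_vamos e he H _ h4.1).1 h)

lemma false_vamos {k K : Type*} [Field k] [Field K] [Algebra k K] [Infinite k] [IsAlgClosed K]
    (e : Fin 8 → K) (he : Function.Injective e)
    (H : ∀ I : Finset (Fin 8), vamosIndep I ↔
      (AlgebraicIndependent.matroid k K).Indep (e '' (I : Set (Fin 8)))) : False := by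
  set M := AlgebraicIndependent.matroid k K with hM
  have hE : M.E = Set.univ := rfl
  have hlt : ∀ I : Finset (Fin 8), I.card ≤ 2 → M.eRk (e '' (I : Set (Fin 8))) ≤ 2 := by
    intro I hI
    rw [rk_vamos e he H I (Or.inl (by omega))]
    exact_mod_cast hI
  have h4 : ∀ (I : Finset (Fin 8)) (S : Set K), vamosIndep I → I.card = 4 →
      e '' (I : Set (Fin 8)) ⊆ S → 4 ≤ M.eRk S := by
    intro I S hI hc hS
    refine le_trans ?_ (M.eRk_mono hS)
    rw [rk_vamos e he H I hI, hc]
    rfl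
  obtain ⟨p, hpA, hpB, hp⟩ := meet8_vamos e he H 0 1 2 3 4 5 (by decide) (by decide) (by decide)
    (by decide) (by decide) (by decide)
  obtain ⟨q, hqA, hqC, hq⟩ := meet8_vamos e he H 0 1 4 5 2 3 (by decide) (by decide) (by decide)
    (by decide) (by decide) (by decide)
  obtain ⟨r, hrB, hrC, hr⟩ := meet8_vamos e he H 2 3 4 5 0 1 (by decide) (by decide) (by decide)
    (by decide) (by decide) (by decide)
  obtain ⟨q', hqB', hqD', hq'⟩ := meet8_vamos e he H 2 3 6 7 4 5 (by decide) (by decide)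
    (by decide) (by decide) (by decide) (by decide)
  obtain ⟨r', hrC', hrD', hr'⟩ := meet8_vamos e he H 4 5 6 7 2 3 (by decide) (by decide)
    (by decide) (by decide) (by decide) (by decide)
  have hpC := concur_vamos M hE hpA hpB hqA hqC hrB hrC hq hr (hlt _ (by decide))
    (hlt _ (by decide)) (hlt _ (by decide)) (h4 {0, 1, 2, 4} _ (by decide) (by decide) (by
      rw [← Set.image_union, ← Set.image_union]
      apply Set.image_mono
      intro x; simp only [← Finset.coe_union, Finset.mem_coe]; revert x; decide))
  have hrD := concur_vamos M hE hrB hrC hqB' hqD' hrC' hrD' hq' hr' (hlt _ (by decide))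
    (hlt _ (by decide)) (hlt _ (by decide)) (h4 {2, 3, 4, 6} _ (by decide) (by decide) (by
      rw [← Set.image_union, ← Set.image_union]
      apply Set.image_mono
      intro x; simp only [← Finset.coe_union, Finset.mem_coe]; revert x; decide))
  have hsub : ∀ Z : Set K, Z ⊆ M.closure Z := fun Z =>
    M.subset_closure Z (by rw [hE]; exact Set.subset_univ _)
  have hcl : ∀ I : Finset (Fin 8), I.card ≤ 2 →
      M.eRk (M.closure (e '' (I : Set (Fin 8)))) ≤ 2 := fun I hI => by
    rw [M.eRk_closure_eq]; exact hlt I hI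
  have hpr : p ∈ M.closure {r} := by
    by_contra hcon
    have h2 := pair_vamos M hE hr hcon
    have s := submod_vamos M _ _ (l := 2) (hcl {2, 3} (by decide)) (hcl {4, 5} (by decide)) (by
      rw [← h2]
      apply M.eRk_mono
      rintro x (rfl | rfl)
      · exact ⟨hpB, hpC⟩
      · exact ⟨hrB, hrC⟩)
    have s' := (ENat.add_le_add_iff_right (by simp)).1 s
    have h3 := rk_vamos e he H {2, 3, 4} (by decide)
    have h5 := (M.eRk_mono (show e '' (({2, 3, 4} : Finset (Fin 8)) : Set (Fin 8)) ⊆ _ from by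
      refine Set.Subset.trans ?_ (Set.union_subset_union (hsub _) (hsub _))
      rw [← Set.image_union]
      apply Set.image_mono
      intro x; simp only [← Finset.coe_union, Finset.mem_coe]; revert x; decide)).trans s'
    rw [h3] at h5
    exact absurd h5 (by decide)
  have hpD := M.closure_subset_closure_of_subset_closure (Set.singleton_subset_iff.2 hrD) hpr
  have s := submod_vamos M _ _ (l := 1) (hcl {0, 1} (by decide)) (hcl {6, 7} (by decide)) (by
      have h1 : M.eRk {p} = 1 := by
        rw [show ({p} : Set K) = insert p ∅ by simp,
          Matroid.eRk_insert_eq_add_one ⟨by simp [hE], hp⟩, Matroid.eRk_empty]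
        rfl
      rw [← h1]
      apply M.eRk_mono
      rintro x rfl
      exact ⟨hpA, hpD⟩)
  have h5 := h4 {0, 1, 6, 7}
    (M.closure (e '' (({0, 1} : Finset (Fin 8)) : Set (Fin 8))) ∪
      M.closure (e '' (({6, 7} : Finset (Fin 8)) : Set (Fin 8)))) (by decide) (by decide) (by
      refine Set.Subset.trans ?_ (Set.union_subset_union (hsub _) (hsub _))
      rw [← Set.image_union]
      apply Set.image_mono
      intro x; simp only [← Finset.coe_union, Finset.mem_coe]; revert x; decide)
  have h6 : (4 : ℕ∞) + 1 ≤ 2 + 2 := (add_le_add_left h5 1).trans s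
  exact absurd h6 (by decide)

/-- **Ingleton–Main 1975.**  The Vámos matroid is not algebraic. -/
theorem vamos_not_algebraic :
    ∀ (k K : Type*) [Field k] [Field K] [Algebra k K] (σ : Fin 8 → K),
      Function.Injective σ →
      ¬ (∀ I : Finset (Fin 8),
          vamosIndep I ↔ AlgebraicIndependent k (fun e : {x // x ∈ I} => σ e.1)) := by
  intro k K _ _ _ σ hσ H
  let K' := AlgebraicClosure K
  let k' := algebraicClosure k K'
  have hcl : IsAlgClosed k' := (inferInstance : IsAlgClosure k k').isAlgClosed
  have hinf : Infinite k' := IsAlgClosed.instInfinite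
  let e : Fin 8 → K' := fun i => algebraMap K K' (σ i)
  have he : Function.Injective e := (algebraMap K K').injective.comp hσ
  refine false_vamos (k := k') (K := K') e he ?_
  intro I
  rw [H I, AlgebraicIndependent.matroid_indep_iff]
  rw [← AlgHom.algebraicIndependent_iff (IsScalarTower.toAlgHom k K K') (algebraMap K K').injective]
  rw [Algebra.IsAlgebraic.algebraicIndependent_iff k k']
  exact algebraicIndependent_image (R := k') (f := e) (s := (I : Set (Fin 8))) he.injOn
end

section
/- For every integer k ≥ 3, the matroid M_k is not algebraic: there exist no field extension k' ⊆ K and injective map σ : E → K such that a set I ⊆ E is independent in M_k exactly when the family (σ(e))_{e ∈ I} is algebraically independent over k'. -/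
/-- The family `H_k` of circuit-hyperplanes of `M_k` on `E = (Fin 3) × (Fin k)`, where
`(0, i), (1, i), (2, i)` stand for `a_{i+1}, b_{i+1}, c_{i+1}`. -/
def Hfam (k : ℕ) : Set (Finset (Fin 3 × Fin k)) :=
  {H | ∃ i j : Fin k, i < j ∧
    (H = {(0, i), (0, j), (1, i), (1, j)} ∨
     (H = {(0, i), (0, j), (2, i), (2, j)} ∧ ¬((i : ℕ) = 0 ∧ (j : ℕ) = k - 1)) ∨
     H = {(1, i), (1, j), (2, i), (2, j)})}

/-- The independent sets of `M_k`: all sets of size at most `3` together with all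
`4`-element sets not in `H_k`. -/
def MkIndep (k : ℕ) (I : Finset (Fin 3 × Fin k)) : Prop :=
  I.card ≤ 3 ∨ (I.card = 4 ∧ I ∉ Hfam k)

open Polynomial

theorem kron_coeff {D : Type*} [Field D] (N : ℕ) (F : D[X][X])
    (hF : ∀ j, (F.coeff j).natDegree < N) (n : ℕ) :
    (F.eval (X ^ N : D[X])).coeff n = (F.coeff (n / N)).coeff (n % N) := by
  have hN : 0 < N := lt_of_le_of_lt (Nat.zero_le _) (hF 0)
  rw [Polynomial.eval_eq_sum_range, Polynomial.finsetSum_coeff]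
  have key : ∀ j, (F.coeff j * (X ^ N : D[X]) ^ j).coeff n
      = if j = n / N then (F.coeff (n / N)).coeff (n % N) else 0 := by
    intro j
    rw [← pow_mul, Polynomial.coeff_mul_X_pow']
    have hdm := Nat.div_add_mod n N
    have hmod := Nat.mod_lt n hN
    split_ifs with h1 h2 h2
    · subst h2
      congr 1
      omega
    · apply Polynomial.coeff_eq_zero_of_natDegree_lt
      refine lt_of_lt_of_le (hF j) ?_
      have hle : j ≤ n / N := by
        rw [Nat.le_div_iff_mul_le hN, mul_comm]; exact h1
      have hlt : j + 1 ≤ n / N := by omega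
      have := Nat.mul_le_mul_left N hlt
      rw [mul_add] at this
      omega
    · exfalso; apply h1; subst h2; omega
    · rfl
  simp_rw [key]
  rw [Finset.sum_ite_eq']
  split_ifs with h
  · rfl
  · have : F.coeff (n / N) = 0 := by
      apply Polynomial.coeff_eq_zero_of_natDegree_lt
      simpa using h
    rw [this]; simp

theorem exists_bound {D : Type*} [Field D] (F : D[X][X]) :
    ∃ N, ∀ N' ≥ N, ∀ j, (F.coeff j).natDegree < N' := by
  refine ⟨(F.support.sup fun j => (F.coeff j).natDegree) + 1, fun N' hN' j => ?_⟩
  by_cases hj : j ∈ F.support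
  · have := Finset.le_sup (f := fun j => (F.coeff j).natDegree) hj
    omega
  · rw [Polynomial.notMem_support_iff.mp hj]; simp; omega

theorem factor_descent {L D : Type*} [Field L] [Field D] [Algebra L D]
    (hL : ∀ d : D, IsIntegral L d → d ∈ (algebraMap L D).range)
    (F : L[X][X]) (hF : F ≠ 0) (G : D[X][X])
    (hG : G ∣ F.map (mapRingHom (algebraMap L D))) (N : ℕ)
    (hNF : ∀ j, (F.coeff j).natDegree < N) (hNG : ∀ j, (G.coeff j).natDegree < N) (j i : ℕ) :
    (G.coeff j).coeff i * (G.eval (X ^ N : D[X])).leadingCoeff⁻¹ ∈ (algebraMap L D).range := by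
  have hN : 0 < N := lt_of_le_of_lt (Nat.zero_le _) (hNF 0)
  set f : L[X] := F.eval (X ^ N : L[X]) with hf
  have hf0 : f ≠ 0 := by
    intro h0
    apply hF
    ext j i
    by_cases hi : i < N
    · have := kron_coeff N F hNF (N * j + i)
      rw [← hf, h0, Nat.mul_add_div hN, Nat.div_eq_of_lt hi, Nat.mul_add_mod, Nat.mod_eq_of_lt hi] at this
      simpa using this.symm
    · simp only [coeff_zero]
      exact Polynomial.coeff_eq_zero_of_natDegree_lt (lt_of_lt_of_le (hNF j) (not_lt.mp hi))
  set g : D[X] := G.eval (X ^ N : D[X]) with hg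
  have hdvd : g ∣ f.map (algebraMap L D) := by
    have := Polynomial.eval_dvd (x := (X ^ N : D[X])) hG
    convert this using 1
    rw [hf, Polynomial.eval_map]
    have := Polynomial.hom_eval₂ F (RingHom.id _) (mapRingHom (algebraMap L D)) (X ^ N)
    simpa [Polynomial.eval₂_id] using this
  have hfm0 : f.map (algebraMap L D) ≠ 0 :=
    (Polynomial.map_ne_zero_iff (algebraMap L D).injective).mpr hf0
  have hg0 : g ≠ 0 := fun h => hfm0 (by rw [h] at hdvd; exact zero_dvd_iff.mp hdvd)
  by_cases hi : i < N
  · have hc := kron_coeff N G hNG (N * j + i)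
    rw [Nat.mul_add_div hN, Nat.div_eq_of_lt hi, Nat.mul_add_mod, Nat.mod_eq_of_lt hi, ← hg, add_zero] at hc
    rw [← hc, ← Polynomial.coeff_mul_C]
    apply hL
    have hmon := Polynomial.monic_mul_leadingCoeff_inv hg0
    have hl := integralClosure.mem_lifts_of_monic_of_dvd_map D
      (f := f * C f.leadingCoeff⁻¹) (Polynomial.monic_mul_leadingCoeff_inv hf0) hmon (by
        have h1 : g * C g.leadingCoeff⁻¹ ∣ g :=
          (associated_mul_unit_left g _ (by simpa using hg0)).dvd
        rw [Polynomial.map_mul]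
        exact (h1.trans hdvd).trans (dvd_mul_right _ _))
    rw [Polynomial.lifts_iff_coeff_lifts] at hl
    obtain ⟨z, hz⟩ := hl (N * j + i)
    rw [← hz]
    exact z.2
  · have : (G.coeff j).coeff i = 0 :=
      Polynomial.coeff_eq_zero_of_natDegree_lt (lt_of_lt_of_le (hNG j) (not_lt.mp hi))
    rw [this, zero_mul]; exact zero_mem _

noncomputable def ev {D K : Type*} [Field D] [Field K] [Algebra D K] (x y : K) : D[X][X] →+* K :=
  eval₂RingHom (aeval x : D[X] →ₐ[D] K).toRingHom y

theorem exists_gen {D K : Type*} [Field D] [Field K] [Algebra D K] (x y : K)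
    (hx : Transcendental D x) (F : D[X][X]) (hF : F ≠ 0) (hFe : ev x y F = 0) :
    ∃ G : D[X][X], G ≠ 0 ∧ ev x y G = 0 ∧ ∀ F' : D[X][X], ev x y F' = 0 → G ∣ F' := by
  have hP : (RingHom.ker (ev (D := D) x y)).IsPrime := RingHom.ker_isPrime _
  obtain ⟨G, hG, hGp⟩ := hP.exists_mem_prime_of_ne_bot (by
    intro h; apply hF
    have : F ∈ RingHom.ker (ev (D := D) x y) := hFe
    rw [h] at this; simpa using this)
  have hGe : ev x y G = 0 := hG
  refine ⟨G, hGp.ne_zero, hGe, fun F' hF' => ?_⟩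
  have hinj : Function.Injective (aeval x : D[X] →ₐ[D] K).toRingHom :=
    transcendental_iff_injective.mp hx
  have hdeg : G.natDegree ≠ 0 := by
    intro h0
    rw [Polynomial.natDegree_eq_zero] at h0
    obtain ⟨c, rfl⟩ := h0
    have : (aeval x : D[X] →ₐ[D] K).toRingHom c = 0 := by simpa [ev] using hGe
    rw [map_eq_zero_iff _ hinj] at this
    exact hGp.ne_zero (by rw [this, C_0])
  have hprim : G.IsPrimitive := hGp.irreducible.isPrimitive hdeg
  let Q := FractionRing D[X]
  have hirr : Irreducible (G.map (algebraMap D[X] Q)) :=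
    (hprim.irreducible_iff_irreducible_map_fraction_map).mp hGp.irreducible
  apply hprim.dvd_of_fraction_map_dvd_fraction_map (K := Q)
  let ψ : Q →+* K := IsFractionRing.lift hinj
  have hψ : ψ.comp (algebraMap D[X] Q) = (aeval x : D[X] →ₐ[D] K).toRingHom := by
    ext z <;> simp [ψ]
  have hev : ∀ H : D[X][X], (H.map (algebraMap D[X] Q)).eval₂ ψ y = ev x y H := by
    intro H
    rw [Polynomial.eval₂_map, hψ]; rfl
  by_contra hnd
  obtain ⟨a, b, hab⟩ := (hirr.coprime_iff_not_dvd).mpr hnd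
  have := congrArg (fun p => p.eval₂ ψ y) hab
  simp [Polynomial.eval₂_add, Polynomial.eval₂_mul, hev, hGe, hF'] at this

theorem im_poly {L₁ L₂ D K : Type*} [Field L₁] [Field L₂] [Field D] [Field K] [Algebra L₁ D]
    [Algebra L₂ D] [Algebra D K]
    (h₁ : ∀ d : D, IsIntegral L₁ d → d ∈ (algebraMap L₁ D).range)
    (h₂ : ∀ d : D, IsIntegral L₂ d → d ∈ (algebraMap L₂ D).range)
    (x y : K) (hx : Transcendental D x) (F₁ : L₁[X][X]) (F₂ : L₂[X][X])
    (hF₁ : F₁ ≠ 0) (hF₂ : F₂ ≠ 0)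
    (he₁ : ev x y (F₁.map (mapRingHom (algebraMap L₁ D))) = 0)
    (he₂ : ev x y (F₂.map (mapRingHom (algebraMap L₂ D))) = 0) :
    ∃ G : D[X][X], G ≠ 0 ∧ ev x y G = 0 ∧ ∀ j i, (G.coeff j).coeff i ∈ (algebraMap L₁ D).range ∧
      (G.coeff j).coeff i ∈ (algebraMap L₂ D).range := by
  obtain ⟨G, hG0, hGe, hGd⟩ := exists_gen x y hx _ (by
    rw [Ne, Polynomial.map_eq_zero_iff
      (Polynomial.map_injective _ (algebraMap L₁ D).injective)]
    exact hF₁) he₁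
  obtain ⟨N₁, hN₁⟩ := exists_bound F₁
  obtain ⟨N₂, hN₂⟩ := exists_bound F₂
  obtain ⟨N₃, hN₃⟩ := exists_bound G
  set N := max N₁ (max N₂ N₃) with hN
  have k₁ := factor_descent h₁ F₁ hF₁ G (hGd _ he₁) N (hN₁ _ (by omega)) (hN₃ _ (by omega))
  have k₂ := factor_descent h₂ F₂ hF₂ G (hGd _ he₂) N (hN₂ _ (by omega)) (hN₃ _ (by omega))
  set c := (G.eval (X ^ N : D[X])).leadingCoeff⁻¹ with hc
  have hNG := hN₃ N (by omega)
  have hc0 : c ≠ 0 := by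
    rw [hc, Ne, inv_eq_zero, Polynomial.leadingCoeff_eq_zero]
    intro h0
    apply hG0
    have hNpos : 0 < N := lt_of_le_of_lt (Nat.zero_le _) (hNG 0)
    ext j i
    by_cases hi : i < N
    · have := kron_coeff N G hNG (N * j + i)
      rw [h0, Nat.mul_add_div hNpos, Nat.div_eq_of_lt hi, Nat.mul_add_mod, Nat.mod_eq_of_lt hi] at this
      simpa using this.symm
    · simp only [coeff_zero]
      exact Polynomial.coeff_eq_zero_of_natDegree_lt (lt_of_lt_of_le (hNG j) (not_lt.mp hi))
  refine ⟨G * C (C c), mul_ne_zero hG0 (by simpa using hc0), by rw [map_mul, hGe, zero_mul],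
    fun j i => ?_⟩
  rw [Polynomial.coeff_mul_C, Polynomial.coeff_mul_C]
  exact ⟨k₁ j i, k₂ j i⟩

section Comb
variable {α : Type*} {M : Matroid α}

theorem cl_mem (hE : M.E = Set.univ) {a : α} {Y : Set α} (h : a ∈ Y) : a ∈ M.closure Y :=
  M.subset_closure Y (by rw [hE]; exact Set.subset_univ _) h

theorem cl_sub {X Y : Set α} {z : α} (hz : z ∈ M.closure X) (h : ∀ w ∈ X, w ∈ M.closure Y) :
    z ∈ M.closure Y :=
  M.closure_subset_closure_of_subset_closure h hz

theorem cl_sub1 {a z : α} {Y : Set α} (hz : z ∈ M.closure {a}) (ha : a ∈ M.closure Y) :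
    z ∈ M.closure Y := cl_sub hz (by rintro w rfl; exact ha)

theorem cl_sub2 {a b z : α} {Y : Set α} (hz : z ∈ M.closure {a, b}) (ha : a ∈ M.closure Y)
    (hb : b ∈ M.closure Y) : z ∈ M.closure Y :=
  cl_sub hz (by rintro w (rfl | rfl) <;> assumption)

theorem cl_sub3 {a b c z : α} {Y : Set α} (hz : z ∈ M.closure {a, b, c}) (ha : a ∈ M.closure Y)
    (hb : b ∈ M.closure Y) (hc : c ∈ M.closure Y) : z ∈ M.closure Y :=
  cl_sub hz (by rintro w (rfl | rfl | rfl) <;> assumption)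

theorem cl_sub4 {a b c d z : α} {Y : Set α} (hz : z ∈ M.closure {a, b, c, d})
    (ha : a ∈ M.closure Y)
    (hb : b ∈ M.closure Y) (hc : c ∈ M.closure Y) (hd : d ∈ M.closure Y) : z ∈ M.closure Y :=
  cl_sub hz (by rintro w (rfl | rfl | rfl | rfl) <;> assumption)

theorem cl_exch {a z : α} {X : Set α} (hz : z ∈ M.closure (insert a X)) (hn : z ∉ M.closure X) :
    a ∈ M.closure (insert z X) := M.mem_closure_insert hn hz

theorem cl_exch1 {a z : α} (hz : z ∈ M.closure {a}) (hn : z ∉ M.closure ∅) :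
    a ∈ M.closure {z} := by
  have := M.mem_closure_insert (X := ∅) (e := z) (f := a) hn (by simpa using hz)
  simpa using this

theorem rank_two (hE : M.E = Set.univ) {a b p q : α} (hp0 : p ∉ M.closure ∅)
    (hq0 : q ∉ M.closure {p}) (hp : p ∈ M.closure {a, b}) (hq : q ∈ M.closure {a, b}) :
    a ∈ M.closure {p, q} := by
  have hpp : p ∈ M.closure {p, q} := cl_mem hE (by simp)
  have hqq : q ∈ M.closure {p, q} := cl_mem hE (by simp)
  by_cases h : p ∈ M.closure {b}
  · have hb : b ∈ M.closure {p} := cl_exch1 h hp0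
    have : q ∈ M.closure {a, p} := cl_sub2 hq (cl_mem hE (by simp))
      (cl_sub1 hb (cl_mem hE (by simp)))
    exact cl_sub2 (cl_exch this hq0) hqq hpp
  · have ha : a ∈ M.closure {p, b} := cl_exch hp h
    have : q ∈ M.closure {b, p} := cl_sub2 hq (cl_sub2 ha (cl_mem hE (by simp))
      (cl_mem hE (by simp))) (cl_mem hE (by simp))
    have hb : b ∈ M.closure {p, q} := cl_sub2 (cl_exch this hq0) hqq hpp
    exact cl_sub2 ha hpp hb

/-- The property of full algebraic matroids behind the Ingleton–Main lemma. -/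
def IMProp (M : Matroid α) : Prop :=
  ∀ (S T : Set α) (x y : α), x ∉ M.closure (S ∪ T) → y ∈ M.closure (insert x S) →
    y ∈ M.closure (insert x T) → y ∈ M.closure (insert x (M.closure S ∩ M.closure T))

theorem concur (hE : M.E = Set.univ) (hIM : IMProp M) {a b c d x y : α}
    (hx : x ∉ M.closure {a, b, c, d}) (h1 : y ∈ M.closure {x, a, b})
    (h2 : y ∈ M.closure {x, c, d}) (hy : y ∉ M.closure {x}) (hc : c ∉ M.closure {a, b}) :
    ∃ p, p ∉ M.closure ∅ ∧ p ∈ M.closure {a, b} ∧ p ∈ M.closure {c, d} ∧ p ∈ M.closure {x, y} := by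
  have h := hIM {a, b} {c, d} x y (by
    have : ({a, b} ∪ {c, d} : Set α) = {a, b, c, d} := by ext; simp; tauto
    rwa [this]) h1 h2
  by_cases h0 : ∀ p ∈ M.closure {a, b} ∩ M.closure {c, d}, p ∈ M.closure ∅
  · exfalso
    apply hy
    refine cl_sub h ?_
    rintro w (rfl | hw)
    · exact cl_mem hE (by simp)
    · exact M.closure_subset_closure (Set.empty_subset _) (h0 w hw)
  · push Not at h0
    obtain ⟨p, ⟨hp1, hp2⟩, hp0⟩ := h0
    refine ⟨p, hp0, hp1, hp2, ?_⟩
    have key : y ∈ M.closure {p, x} := by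
      refine cl_sub h ?_
      rintro w (rfl | ⟨hw1, hw2⟩)
      · exact cl_mem hE (by simp)
      · by_contra hwn
        have hwp : w ∉ M.closure {p} := fun hh => hwn (cl_sub1 hh (cl_mem hE (by simp)))
        exact hc (cl_sub2 (rank_two hE hp0 hwp hp2 hw2) hp1 hw1)
    exact cl_sub2 (cl_exch key hy) (cl_mem hE (by simp)) (cl_mem hE (by simp))

theorem concur3 (hE : M.E = Set.univ) (hIM : IMProp M) {a b : Fin 3 → α}
    (hH : ∀ i j, i ≠ j → b j ∈ M.closure {a j, a i, b i})
    (h4 : a 2 ∉ M.closure {a 1, a 0, b 0})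
    (h3 : ∀ i j, i ≠ j → a j ∉ M.closure {a i, b i})
    (h2 : b 2 ∉ M.closure {a 2}) :
    ∃ p, p ∉ M.closure ∅ ∧ ∀ i, p ∈ M.closure {a i, b i} := by
  obtain ⟨p, hp, h0, h1, h2'⟩ := concur hE hIM (a := a 0) (b := b 0) (c := a 1) (d := b 1)
    (x := a 2) (y := b 2)
    (fun h => h4 (cl_sub4 h (cl_mem hE (by simp)) (cl_mem hE (by simp)) (cl_mem hE (by simp))
      (hH 0 1 (by decide))))
    (hH 0 2 (by decide)) (hH 1 2 (by decide)) h2 (h3 0 1 (by decide))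
  refine ⟨p, hp, fun i => ?_⟩
  fin_cases i
  · exact h0
  · exact h1
  · exact h2'

theorem no_config (hE : M.E = Set.univ) (hIM : IMProp M) {a b c : Fin 3 → α}
    (hab : ∀ i j, i ≠ j → b j ∈ M.closure {a j, a i, b i})
    (hbc : ∀ i j, i ≠ j → c j ∈ M.closure {b j, b i, c i})
    (hac0 : c 1 ∈ M.closure {a 1, a 0, c 0}) (hac1 : c 2 ∈ M.closure {a 2, a 1, c 1})
    (h4a : a 2 ∉ M.closure {a 1, a 0, b 0}) (h4b : b 2 ∉ M.closure {b 1, b 0, c 0})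
    (h4 : ∀ i j, i ≠ j → b i ∉ M.closure {a i, c i, a j})
    (hn : c 0 ∉ M.closure {a 0, a 2, c 2})
    (t1 : ∀ i j, i ≠ j → a j ∉ M.closure {a i, b i})
    (t2 : ∀ i j, i ≠ j → b j ∉ M.closure {b i, c i})
    (t3 : ∀ i j, i ≠ j → a j ∉ M.closure {a i, c i})
    (t4 : b 2 ∉ M.closure {a 2}) (t5 : c 2 ∉ M.closure {b 2})
    (t6 : ∀ i j, i ≠ j → b j ∉ M.closure {a i, b i})
    (t7 : c 0 ∉ M.closure {a 0, b 0}) : False := by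
  obtain ⟨p, hp0, hp⟩ := concur3 hE hIM hab h4a t1 t4
  obtain ⟨q, hq0, hq⟩ := concur3 hE hIM hbc h4b t2 t5
  have other : ∀ i : Fin 3, ∃ j, i ≠ j := by decide
  have hpa : ∀ i, p ∉ M.closure {a i} := fun i h => by
    obtain ⟨j, hij⟩ := other i
    exact t1 j i hij.symm (cl_sub1 (cl_exch1 h hp0) (hp j))
  have hpb : ∀ i, p ∉ M.closure {b i} := fun i h => by
    obtain ⟨j, hij⟩ := other i
    exact t6 j i hij.symm (cl_sub1 (cl_exch1 h hp0) (hp j))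
  have hbp : ∀ i, b i ∈ M.closure {p, a i} := fun i =>
    cl_exch (by rw [Set.pair_comm]; exact hp i) (hpa i)
  have hqp : q ∉ M.closure {p} := fun h => by
    have h1 : p ∈ M.closure {c 0, b 0} := by
      rw [Set.pair_comm]; exact cl_sub1 (cl_exch1 h hq0) (hq 0)
    exact t7 (cl_sub2 (cl_exch h1 (hpb 0)) (hp 0) (cl_mem hE (by simp)))
  have hqx : ∀ i, q ∈ M.closure {p, a i, c i} := fun i =>
    cl_sub2 (hq i) (cl_sub2 (hbp i) (cl_mem hE (by simp)) (cl_mem hE (by simp)))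
      (cl_mem hE (by simp))
  have step : ∀ i j, i ≠ j → c j ∈ M.closure {a j, a i, c i} →
      ∃ r, r ∉ M.closure ∅ ∧ r ∈ M.closure {a i, c i} ∧ r ∈ M.closure {a j, c j} ∧
        r ∈ M.closure {p, q} := by
    intro i j hij hc
    refine concur hE hIM (fun h => ?_) (hqx i) (hqx j) hqp (t3 i j hij)
    refine h4 i j hij ?_
    have hp' : p ∈ M.closure {a i, c i, a j} :=
      cl_sub4 h (cl_mem hE (by simp)) (cl_mem hE (by simp)) (cl_mem hE (by simp))
        (cl_sub3 hc (cl_mem hE (by simp)) (cl_mem hE (by simp)) (cl_mem hE (by simp)))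
    exact cl_sub2 (hbp i) hp' (cl_mem hE (by simp))
  obtain ⟨r, hr0, hr1, hr2, hr3⟩ := step 0 1 (by decide) hac0
  obtain ⟨s, hs0, hs1, hs2, hs3⟩ := step 1 2 (by decide) hac1
  have hsr : s ∈ M.closure {r} := by
    by_contra hsr
    have h1 : p ∈ M.closure {a 1, c 1} := cl_sub2 (rank_two hE hr0 hsr hr3 hs3) hr2 hs1
    refine h4 1 0 (by decide) (cl_sub2 (hbp 1) (cl_sub2 h1 ?_ ?_) ?_) <;>
      exact cl_mem hE (by simp)
  have hr4 : r ∈ M.closure {a 2, c 2} := cl_sub1 (cl_exch1 hsr hs0) hs2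
  have hra : r ∉ M.closure {a 0} := fun h =>
    t3 1 0 (by decide) (cl_sub1 (cl_exch1 h hr0) hr2)
  have hc0 : c 0 ∈ M.closure {r, a 0} := cl_exch (by rw [Set.pair_comm]; exact hr1) hra
  exact hn (cl_sub2 hc0 (cl_sub2 hr4 (cl_mem hE (by simp)) (cl_mem hE (by simp)))
    (cl_mem hE (by simp)))

end Comb

section Alg
variable {k K : Type*} [Field k] [Field K] [Algebra k K]

theorem mem_cl {S : Set K} {z : K} :
    z ∈ (AlgebraicIndependent.matroid k K).closure S ↔ IsAlgebraic (Algebra.adjoin k S) z := by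
  rw [AlgebraicIndependent.matroid_closure_eq, SetLike.mem_coe, Subalgebra.mem_algebraicClosure]

theorem exists_field (k : Type*) {K : Type*} [Field k] [Field K] [Algebra k K] (S : Set K) :
    ∃ L : IntermediateField k K, (L : Set K) = (AlgebraicIndependent.matroid k K).closure S ∧
      ∀ z : K, IsAlgebraic L z → z ∈ L := by
  obtain ⟨A, hA, hA'⟩ := AlgebraicIndependent.matroid_isFlat_iff.mp
    ((AlgebraicIndependent.matroid k K).isFlat_closure S)
  rw [← hA] at hA'
  let L : IntermediateField k K := A.toIntermediateField (fun z hz =>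
    hA' _ (isAlgebraic_algebraMap (⟨z, hz⟩ : A)).inv)
  exact ⟨L, hA, fun z hz => hA' z hz⟩

theorem exists_poly (L : IntermediateField k K) (x y : K)
    (h : y ∈ (AlgebraicIndependent.matroid k K).closure (insert x (L : Set K))) :
    ∃ F : L[X][X], F ≠ 0 ∧ F.eval₂ (aeval x : L[X] →ₐ[L] K).toRingHom y = 0 := by
  rw [mem_cl] at h
  have hle : Algebra.adjoin k (insert x (L : Set K)) ≤
      ((aeval x : L[X] →ₐ[L] K).range.restrictScalars k) := by
    rw [Algebra.adjoin_le_iff]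
    rintro z (rfl | hz)
    · exact ⟨X, by simp⟩
    · exact ⟨C ⟨z, hz⟩, by simp⟩
  obtain ⟨p, hp0, hp⟩ := h
  let φ : L[X] →+* (aeval x : L[X] →ₐ[L] K).toRingHom.range :=
    (aeval x : L[X] →ₐ[L] K).toRingHom.rangeRestrict
  let ι : Algebra.adjoin k (insert x (L : Set K)) →+* (aeval x : L[X] →ₐ[L] K).toRingHom.range :=
    (Subalgebra.inclusion hle).toRingHom
  obtain ⟨F, hF⟩ := Polynomial.map_surjective φ
    (aeval x : L[X] →ₐ[L] K).toRingHom.rangeRestrict_surjective (p.map ι)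
  have hι : Function.Injective ι := Subalgebra.inclusion_injective hle
  refine ⟨F, ?_, ?_⟩
  · rintro rfl
    rw [Polynomial.map_zero, eq_comm, Polynomial.map_eq_zero_iff hι] at hF
    exact hp0 hF
  · have h1 : (aeval x : L[X] →ₐ[L] K).toRingHom =
      (aeval x : L[X] →ₐ[L] K).toRingHom.range.subtype.comp φ := rfl
    rw [h1, ← Polynomial.eval₂_map, hF, Polynomial.eval₂_map]
    exact hp

theorem alg_IMProp : IMProp (AlgebraicIndependent.matroid k K) := by
  intro S T x y hx hS hT
  set M := AlgebraicIndependent.matroid k K with hM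
  obtain ⟨L₁, hL₁, hc₁⟩ := exists_field k S
  obtain ⟨L₂, hL₂, hc₂⟩ := exists_field k T
  obtain ⟨D, hD, hcD⟩ := exists_field k (S ∪ T)
  rw [← hM] at hL₁ hL₂ hD
  have le₁ : L₁ ≤ D := by
    intro z hz
    rw [← SetLike.mem_coe, hD]
    rw [← SetLike.mem_coe, hL₁] at hz
    exact M.closure_subset_closure Set.subset_union_left hz
  have le₂ : L₂ ≤ D := by
    intro z hz
    rw [← SetLike.mem_coe, hD]
    rw [← SetLike.mem_coe, hL₂] at hz
    exact M.closure_subset_closure Set.subset_union_right hz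
  rw [← M.closure_insert_closure_eq_closure_insert, ← hL₁] at hS
  rw [← M.closure_insert_closure_eq_closure_insert, ← hL₂] at hT
  obtain ⟨F₁, hF₁, he₁⟩ := exists_poly L₁ x y hS
  obtain ⟨F₂, hF₂, he₂⟩ := exists_poly L₂ x y hT
  let a₁ : Algebra L₁ D := (IntermediateField.inclusion le₁).toRingHom.toAlgebra
  let a₂ : Algebra L₂ D := (IntermediateField.inclusion le₂).toRingHom.toAlgebra
  have tow₁ : IsScalarTower L₁ D K := IsScalarTower.of_algebraMap_eq fun _ => rfl
  have tow₂ : IsScalarTower L₂ D K := IsScalarTower.of_algebraMap_eq fun _ => rfl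
  have hxD : Transcendental D x := fun h => hx (by rw [← hD]; exact hcD x h)
  have tr : ∀ (L : IntermediateField k K) [Algebra L D] [IsScalarTower L D K] (F : L[X][X]),
      F.eval₂ (aeval x : L[X] →ₐ[L] K).toRingHom y = 0 →
      ev x y (F.map (mapRingHom (algebraMap L D))) = 0 := by
    intro L _ _ F hF
    rw [ev, Polynomial.coe_eval₂RingHom, Polynomial.eval₂_map]
    have hcomp : (aeval x : D[X] →ₐ[D] K).toRingHom.comp (mapRingHom (algebraMap L D)) =
        (aeval x : L[X] →ₐ[L] K).toRingHom := by
      refine Polynomial.ringHom_ext (fun a => ?_) ?_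
      · simpa using (IsScalarTower.algebraMap_apply L D K a).symm
      · simp
    rw [hcomp]
    exact hF
  have hi₁ : ∀ d : D, IsIntegral L₁ d → d ∈ (algebraMap L₁ D).range := fun d hd =>
    ⟨⟨d, hc₁ _ (hd.isAlgebraic.algebraMap (A := K))⟩, rfl⟩
  have hi₂ : ∀ d : D, IsIntegral L₂ d → d ∈ (algebraMap L₂ D).range := fun d hd =>
    ⟨⟨d, hc₂ _ (hd.isAlgebraic.algebraMap (A := K))⟩, rfl⟩
  obtain ⟨G, hG0, hGe, hGc⟩ := im_poly hi₁ hi₂ x y hxD F₁ F₂ hF₁ hF₂ (tr _ _ he₁) (tr _ _ he₂)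
  rw [mem_cl]
  set A := Algebra.adjoin k (insert x (M.closure S ∩ M.closure T)) with hA
  have hinj : Function.Injective (aeval x : D[X] →ₐ[D] K).toRingHom :=
    transcendental_iff_injective.mp hxD
  have hlift : G.map (aeval x : D[X] →ₐ[D] K).toRingHom ∈ Polynomial.lifts (algebraMap A K) := by
    rw [Polynomial.lifts_iff_coeff_lifts]
    intro j
    rw [Polynomial.coeff_map]
    refine ⟨⟨aeval x (G.coeff j), ?_⟩, rfl⟩
    rw [Polynomial.aeval_eq_sum_range]
    refine sum_mem fun i _ => ?_
    rw [Algebra.smul_def]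
    refine mul_mem (Algebra.subset_adjoin (Set.mem_insert_of_mem _ ⟨?_, ?_⟩))
      (pow_mem (Algebra.subset_adjoin (Set.mem_insert _ _)) _)
    · obtain ⟨z, hz⟩ := (hGc j i).1
      rw [← hz, ← hL₁]
      exact z.2
    · obtain ⟨z, hz⟩ := (hGc j i).2
      rw [← hz, ← hL₂]
      exact z.2
  obtain ⟨p, hp⟩ := (Polynomial.mem_lifts _).mp hlift
  refine ⟨p, ?_, ?_⟩
  · rintro rfl
    rw [Polynomial.map_zero, eq_comm, Polynomial.map_eq_zero_iff hinj] at hp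
    exact hG0 hp
  · rw [Polynomial.aeval_def, ← Polynomial.eval_map, hp, Polynomial.eval_map]
    exact hGe

end Alg

theorem Hfam_rect {k : ℕ} {H : Finset (Fin 3 × Fin k)} (hH : H ∈ Hfam k) {s t : Fin 3}
    {i j : Fin k} (h1 : (s, i) ∈ H) (h2 : (t, j) ∈ H) : (s, j) ∈ H := by
  obtain ⟨i', j', -, h | ⟨h, -⟩ | h⟩ := hH <;> subst h <;>
    simp only [Finset.mem_insert, Finset.mem_singleton, Prod.mk.injEq] at * <;> tauto

theorem Hfam_excl {k : ℕ} (z l : Fin k) (hz : (z : ℕ) = 0) (hl : (l : ℕ) = k - 1) (hzl : z ≠ l) :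
    ({(2, z), (0, z), (0, l), (2, l)} : Finset (Fin 3 × Fin k)) ∉ Hfam k := by
  rintro ⟨i, j, hij, h⟩
  rcases h with h | ⟨h, hn⟩ | h
  · have := (Finset.ext_iff.mp h (2, z)).mp (by simp)
    simp at this
  · apply hn
    have hi := (Finset.ext_iff.mp h (0, i)).mpr (by simp)
    have hj := (Finset.ext_iff.mp h (0, j)).mpr (by simp)
    simp at hi hj
    have hij' : (i : ℕ) < j := hij
    rcases hi with rfl | rfl <;> rcases hj with rfl | rfl <;> omega
  · have := (Finset.ext_iff.mp h (0, z)).mp (by simp)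
    simp at this

section Bridge
variable {k : ℕ} {k' K : Type*} [Field k'] [Field K] [Algebra k' K] {σ : Fin 3 × Fin k → K}

theorem indep_iff (hσ : Function.Injective σ)
    (h : ∀ I : Finset (Fin 3 × Fin k),
      MkIndep k I ↔ AlgebraicIndependent k' (fun e : {x // x ∈ I} => σ e.1))
    (I : Finset (Fin 3 × Fin k)) :
    (AlgebraicIndependent.matroid k' K).Indep (σ '' (I : Set (Fin 3 × Fin k))) ↔ MkIndep k I := by
  rw [h I, AlgebraicIndependent.matroid_indep_iff]
  exact (algebraicIndependent_image hσ.injOn).symm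

theorem not_mem3 (hσ : Function.Injective σ)
    (h : ∀ I : Finset (Fin 3 × Fin k),
      MkIndep k I ↔ AlgebraicIndependent k' (fun e : {x // x ∈ I} => σ e.1))
    (u v w : Fin 3 × Fin k) (huv : u ≠ v) (huw : u ≠ w) :
    σ u ∉ (AlgebraicIndependent.matroid k' K).closure {σ v, σ w} := by
  have h1 := (indep_iff hσ h {u, v, w}).mpr (Or.inl Finset.card_le_three)
  have h2 := (indep_iff hσ h {v, w}).mpr (Or.inl (Finset.card_le_two.trans (by norm_num)))
  simp only [Finset.coe_insert, Finset.coe_singleton, Set.image_insert_eq, Set.image_singleton]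
    at h1 h2
  rw [h2.insert_indep_iff_of_notMem (by simp [hσ.eq_iff, huv, huw])] at h1
  exact h1.2

theorem mem4 (hσ : Function.Injective σ)
    (h : ∀ I : Finset (Fin 3 × Fin k),
      MkIndep k I ↔ AlgebraicIndependent k' (fun e : {x // x ∈ I} => σ e.1))
    (u v w z : Fin 3 × Fin k) (hc : ({u, v, w, z} : Finset (Fin 3 × Fin k)).card = 4) :
    σ u ∈ (AlgebraicIndependent.matroid k' K).closure {σ v, σ w, σ z} ↔
      ({u, v, w, z} : Finset (Fin 3 × Fin k)) ∈ Hfam k := by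
  have hu : u ∉ ({v, w, z} : Finset (Fin 3 × Fin k)) := by
    intro hu
    rw [Finset.insert_eq_of_mem hu] at hc
    have := Finset.card_le_three (a := v) (b := w) (c := z)
    omega
  have h1 := (indep_iff hσ h {u, v, w, z})
  have h2 := (indep_iff hσ h {v, w, z}).mpr (Or.inl Finset.card_le_three)
  simp only [Finset.coe_insert, Finset.coe_singleton, Set.image_insert_eq, Set.image_singleton]
    at h1 h2
  rw [h2.insert_indep_iff_of_notMem (by simpa [hσ.eq_iff] using hu)] at h1
  simp only [MkIndep, hc, AlgebraicIndependent.matroid_e, Set.mem_diff, Set.mem_univ, true_and]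
    at h1
  have h3 : ¬ (4 ≤ 3) := by norm_num
  tauto

end Bridge

/-- For every `k ≥ 3` the matroid `M_k` is not algebraic. -/
theorem Mk_not_algebraic (k : ℕ) (hk : 3 ≤ k) :
    ∀ (k' K : Type*) [Field k'] [Field K] [Algebra k' K] (σ : Fin 3 × Fin k → K),
      Function.Injective σ →
      ¬ (∀ I : Finset (Fin 3 × Fin k),
          MkIndep k I ↔ AlgebraicIndependent k' (fun e : {x // x ∈ I} => σ e.1)) := by
  intro k' K _ _ _ σ hσ h
  let n : Fin 3 → Fin k := ![⟨0, by omega⟩, ⟨1, by omega⟩, ⟨k - 1, by omega⟩]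
  have n0 : (n 0 : ℕ) = 0 := rfl
  have n1 : (n 1 : ℕ) = 1 := rfl
  have n2 : (n 2 : ℕ) = k - 1 := rfl
  have hn : ∀ i j, i < j → n i < n j := by
    intro i j hij
    rw [Fin.lt_def]
    fin_cases i <;> fin_cases j <;> simp_all <;> omega
  have hne : ∀ i j, i ≠ j → n i ≠ n j := by
    intro i j hij
    rcases lt_or_gt_of_ne hij with h | h
    · exact (hn _ _ h).ne
    · exact (hn _ _ h).ne'
  have n01 := hne 0 1 (by decide)
  have n02 := hne 0 2 (by decide)
  have n12 := hne 1 2 (by decide)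
  have card4 : ∀ (s t : Fin 3) (i j : Fin k), s ≠ t → i ≠ j →
      ({(t, j), (s, j), (s, i), (t, i)} : Finset (Fin 3 × Fin k)).card = 4 := by
    intro s t i j hst hij
    rw [Finset.card_eq_succ]
    refine ⟨(t, j), {(s, j), (s, i), (t, i)}, ?_, rfl, ?_⟩
    · simp [hst.symm, hij.symm]
    · rw [Finset.card_eq_three]
      exact ⟨_, _, _, by simp [hij.symm], by simp [hst], by simp [hst], rfl⟩
  have hH : ∀ (s t : Fin 3), s ≠ t → ∀ i j : Fin k, i ≠ j →
      ({(t, j), (s, j), (s, i), (t, i)} : Finset (Fin 3 × Fin k)) ∈ Hfam k →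
      σ (t, j) ∈ (AlgebraicIndependent.matroid k' K).closure {σ (s, j), σ (s, i), σ (t, i)} :=
    fun s t hst i j hij hm => (mem4 hσ h _ _ _ _ (card4 s t i j hst hij)).mpr hm
  refine no_config (M := AlgebraicIndependent.matroid k' K) rfl alg_IMProp
    (a := fun i => σ (0, n i)) (b := fun i => σ (1, n i)) (c := fun i => σ (2, n i))
    ?_ ?_ ?_ ?_ ?_ ?_ ?_ ?_ ?_ ?_ ?_ ?_ ?_ ?_ ?_
  · intro i j hij
    refine hH 0 1 (by decide) _ _ (hne i j hij) ?_
    rcases lt_or_gt_of_ne hij with h | h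
    · exact ⟨n i, n j, hn _ _ h, Or.inl (by ext; simp; tauto)⟩
    · exact ⟨n j, n i, hn _ _ h, Or.inl (by ext; simp; tauto)⟩
  · intro i j hij
    refine hH 1 2 (by decide) _ _ (hne i j hij) ?_
    rcases lt_or_gt_of_ne hij with h | h
    · exact ⟨n i, n j, hn _ _ h, Or.inr (Or.inr (by ext; simp; tauto))⟩
    · exact ⟨n j, n i, hn _ _ h, Or.inr (Or.inr (by ext; simp; tauto))⟩
  · refine hH 0 2 (by decide) _ _ n01 ?_
    exact ⟨n 0, n 1, hn _ _ (by decide), Or.inr (Or.inl ⟨by ext; simp; tauto, by omega⟩)⟩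
  · refine hH 0 2 (by decide) _ _ n12 ?_
    exact ⟨n 1, n 2, hn _ _ (by decide), Or.inr (Or.inl ⟨by ext; simp; tauto, by omega⟩)⟩
  · rw [mem4 hσ h]
    · intro hm
      have := Hfam_rect hm (s := 1) (i := n 0) (t := 0) (j := n 2) (by simp) (by simp)
      simp [n02.symm] at this
    · rw [Finset.card_insert_of_notMem, Finset.card_eq_three.mpr ⟨_, _, _, _, _, _, rfl⟩] <;>
        simp [n01, n01.symm, n02.symm, n12.symm]
  · rw [mem4 hσ h]
    · intro hm
      have := Hfam_rect hm (s := 2) (i := n 0) (t := 1) (j := n 2) (by simp) (by simp)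
      simp [n02.symm] at this
    · rw [Finset.card_insert_of_notMem, Finset.card_eq_three.mpr ⟨_, _, _, _, _, _, rfl⟩] <;>
        simp [n01, n01.symm, n02.symm, n12.symm]
  · intro i j hij
    have hij' := hne i j hij
    rw [mem4 hσ h]
    · intro hm
      have := Hfam_rect hm (s := 1) (i := n i) (t := 0) (j := n j) (by simp) (by simp)
      simp [hij'.symm] at this
    · rw [Finset.card_insert_of_notMem, Finset.card_eq_three.mpr ⟨_, _, _, _, _, _, rfl⟩] <;>
        simp [hij']
  · rw [mem4 hσ h]
    · exact Hfam_excl _ _ n0 n2 n02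
    · rw [Finset.card_insert_of_notMem, Finset.card_eq_three.mpr ⟨_, _, _, _, _, _, rfl⟩] <;>
        simp [n02]
  · intro i j hij
    exact not_mem3 hσ h _ _ _ (by simp [(hne i j hij).symm]) (by simp)
  · intro i j hij
    exact not_mem3 hσ h _ _ _ (by simp [(hne i j hij).symm]) (by simp)
  · intro i j hij
    exact not_mem3 hσ h _ _ _ (by simp [(hne i j hij).symm]) (by simp)
  · have := not_mem3 hσ h (1, n 2) (0, n 2) (0, n 2) (by simp) (by simp)
    simpa using this
  · have := not_mem3 hσ h (2, n 2) (1, n 2) (1, n 2) (by simp) (by simp)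
    simpa using this
  · intro i j hij
    exact not_mem3 hσ h _ _ _ (by simp) (by simp [(hne i j hij).symm])
  · exact not_mem3 hσ h _ _ _ (by simp) (by simp)
end

section
/- For every integer k ≥ 3 and every m with 2 ≤ m ≤ k−1, the restriction of M_k to the nine-element set {a_1, a_m, a_k, b_1, b_m, b_k, c_1, c_m, c_k} is isomorphic to M_3 via the bijection sending a_1 ↦ a_1, a_m ↦ a_2, a_k ↦ a_3, b_1 ↦ b_1, b_m ↦ b_2, b_k ↦ b_3, c_1 ↦ c_1, c_m ↦ c_2, c_k ↦ c_3 (i.e., a set is independent in the restriction if and only if its image is independent in M_3). -/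
/-- The map sending `a_1 ↦ a_1, a_m ↦ a_2, a_k ↦ a_3` (and likewise on the `b`- and
`c`-rows), from the ground set of `M_k` to the ground set of `M_3`. -/
def phi (k : ℕ) (m : Fin k) : Fin 3 × Fin k → Fin 3 × Fin 3 :=
  fun p => (p.1, if (p.2 : ℕ) = 0 then 0 else if p.2 = m then 1 else 2)

/-- The strictly increasing embedding of the three column indices. -/
def colEmb {k : ℕ} (i0 m ik : Fin k) : Fin 3 → Fin k := ![i0, m, ik]

/-- The inverse embedding of the ground set of `M_3`. -/
def psi {k : ℕ} (e : Fin 3 → Fin k) : Fin 3 × Fin 3 → Fin 3 × Fin k := fun p => (p.1, e p.2)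

theorem psi_inj {k : ℕ} (e : Fin 3 → Fin k) (he : StrictMono e) : Function.Injective (psi e) := by
  rintro ⟨a, b⟩ ⟨c, d⟩ h
  simp only [psi, Prod.mk.injEq] at h
  exact Prod.ext h.1 (he.injective h.2)

theorem image_quad {k : ℕ} (e : Fin 3 → Fin k) (r s i j : Fin 3) :
    (({(r, i), (r, j), (s, i), (s, j)} : Finset (Fin 3 × Fin 3)).image (psi e)) =
      {(r, e i), (r, e j), (s, e i), (s, e j)} := by
  simp [Finset.image_insert, psi]

theorem quad_range {k : ℕ} (e : Fin 3 → Fin k) (J : Finset (Fin 3 × Fin 3)) (r s : Fin 3)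
    (i j : Fin k) (h : J.image (psi e) = {(r, i), (r, j), (s, i), (s, j)}) :
    (∃ u, e u = i) ∧ ∃ v, e v = j := by
  have h1 : (r, i) ∈ J.image (psi e) := by rw [h]; simp
  have h2 : (r, j) ∈ J.image (psi e) := by rw [h]; simp
  simp only [Finset.mem_image, psi, Prod.mk.injEq] at h1 h2
  obtain ⟨p, -, -, hp⟩ := h1
  obtain ⟨q, -, -, hq⟩ := h2
  exact ⟨⟨_, hp⟩, ⟨_, hq⟩⟩

theorem Hfam_image_iff {k : ℕ} (e : Fin 3 → Fin k) (he : StrictMono e)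
    (h0 : ∀ i, (e i : ℕ) = 0 ↔ (i : ℕ) = 0) (h2 : ∀ i, (e i : ℕ) = k - 1 ↔ (i : ℕ) = 3 - 1)
    (J : Finset (Fin 3 × Fin 3)) : J.image (psi e) ∈ Hfam k ↔ J ∈ Hfam 3 := by
  have key : ∀ i j : Fin 3, ∀ r s : Fin 3,
      J.image (psi e) = {(r, e i), (r, e j), (s, e i), (s, e j)} ↔
        J = {(r, i), (r, j), (s, i), (s, j)} := by
    intro i j r s
    rw [← image_quad]
    exact (Finset.image_injective (psi_inj e he)).eq_iff
  have main : ∀ i j : Fin 3, (e i < e j ∧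
      (J.image (psi e) = {(0, e i), (0, e j), (1, e i), (1, e j)} ∨
       (J.image (psi e) = {(0, e i), (0, e j), (2, e i), (2, e j)} ∧
          ¬((e i : ℕ) = 0 ∧ (e j : ℕ) = k - 1)) ∨
       J.image (psi e) = {(1, e i), (1, e j), (2, e i), (2, e j)})) ↔ (i < j ∧
      (J = {(0, i), (0, j), (1, i), (1, j)} ∨
       (J = {(0, i), (0, j), (2, i), (2, j)} ∧ ¬((i : ℕ) = 0 ∧ (j : ℕ) = 3 - 1)) ∨
       J = {(1, i), (1, j), (2, i), (2, j)})) := by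
    intro i j
    rw [he.lt_iff_lt, key, key, key, h0, h2]
  constructor
  · rintro ⟨i, j, hij, h⟩
    have hr : (∃ u, e u = i) ∧ ∃ v, e v = j := by
      rcases h with h | ⟨h, -⟩ | h
      · exact quad_range e J _ _ i j h
      · exact quad_range e J _ _ i j h
      · exact quad_range e J _ _ i j h
    obtain ⟨⟨u, rfl⟩, ⟨v, rfl⟩⟩ := hr
    exact ⟨u, v, (main u v).1 ⟨hij, h⟩⟩
  · rintro ⟨i, j, h⟩
    exact ⟨e i, e j, (main i j).2 h⟩

/-- For `k ≥ 3` and `2 ≤ m ≤ k - 1` (one-based; here `m` is zero-based with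
`m ≠ 0` and `m ≠ k - 1`), the restriction of `M_k` to the nine elements
`{a_1, a_m, a_k, b_1, b_m, b_k, c_1, c_m, c_k}` is isomorphic to `M_3` via `phi`:
`phi` is injective on these nine elements and a subset of them is independent in `M_k`
iff its image is independent in `M_3`. -/
theorem Mk_restriction_iso_M3 (k : ℕ) (hk : 3 ≤ k) (m i0 ik : Fin k)
    (hm0 : (m : ℕ) ≠ 0) (hmk : (m : ℕ) ≠ k - 1)
    (hi0 : (i0 : ℕ) = 0) (hik : (ik : ℕ) = k - 1) :
    Set.InjOn (phi k m)
      ↑({(0, i0), (0, m), (0, ik), (1, i0), (1, m), (1, ik), (2, i0), (2, m), (2, ik)} :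
        Finset (Fin 3 × Fin k)) ∧
    ∀ I : Finset (Fin 3 × Fin k),
      I ⊆ ({(0, i0), (0, m), (0, ik), (1, i0), (1, m), (1, ik), (2, i0), (2, m), (2, ik)} :
        Finset (Fin 3 × Fin k)) →
      (MkIndep k I ↔ MkIndep 3 (I.image (phi k m))) := by
  have hm := m.isLt
  have h0m : i0 < m := by rw [Fin.lt_def]; omega
  have hmik : m < ik := by rw [Fin.lt_def]; omega
  have hmono : StrictMono (colEmb i0 m ik) := by
    rw [Fin.strictMono_iff_lt_succ]
    intro i
    fin_cases i
    · exact h0m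
    · exact hmik
  have c0 : ∀ i, (colEmb i0 m ik i : ℕ) = 0 ↔ (i : ℕ) = 0 := by
    intro i
    fin_cases i <;> simp [colEmb] <;> omega
  have c2 : ∀ i, (colEmb i0 m ik i : ℕ) = k - 1 ↔ (i : ℕ) = 3 - 1 := by
    intro i
    fin_cases i <;> simp [colEmb] <;> omega
  have hS : ∀ p ∈ ({(0, i0), (0, m), (0, ik), (1, i0), (1, m), (1, ik), (2, i0), (2, m), (2, ik)} :
        Finset (Fin 3 × Fin k)), psi (colEmb i0 m ik) (phi k m p) = p := by
    have hik0 : (ik : ℕ) ≠ 0 := by omega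
    have e0 : ∀ r, psi (colEmb i0 m ik) (phi k m (r, i0)) = (r, i0) := by
      intro r; simp [psi, phi, colEmb, hi0]
    have e1 : ∀ r, psi (colEmb i0 m ik) (phi k m (r, m)) = (r, m) := by
      intro r; simp only [psi, phi, if_neg hm0]; simp [colEmb]
    have e2 : ∀ r, psi (colEmb i0 m ik) (phi k m (r, ik)) = (r, ik) := by
      intro r; simp only [psi, phi, if_neg hik0, if_neg (ne_of_gt hmik)]; simp [colEmb]
    intro p hp
    simp only [Finset.mem_insert, Finset.mem_singleton] at hp
    rcases hp with rfl | rfl | rfl | rfl | rfl | rfl | rfl | rfl | rfl <;>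
      first | exact e0 _ | exact e1 _ | exact e2 _
  refine ⟨fun p hp q hq h => ?_, fun I hI => ?_⟩
  · rw [← hS p hp, ← hS q hq, h]
  · have hIm : (I.image (phi k m)).image (psi (colEmb i0 m ik)) = I := by
      rw [Finset.image_image]
      conv_rhs => rw [← Finset.image_id (s := I)]
      exact Finset.image_congr fun p hp => hS p (hI hp)
    have hc : (I.image (phi k m)).card = I.card := by
      conv_rhs => rw [← hIm]
      exact (Finset.card_image_of_injective _ (psi_inj _ hmono)).symm
    have hH := Hfam_image_iff _ hmono c0 c2 (I.image (phi k m))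
    rw [hIm] at hH
    unfold MkIndep
    rw [hc, hH]
end
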